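/- arXiv:2003.00212 — 4 statements merged into one kernel-verified Lean document; each statement's English description precedes it below -/
import Mathlib

section
/- Structural bound for the block Krylov trace estimator (Theorem 5, first bound): under the stated assumptions, the quantity Tr(A) − Tr(T) is real and satisfies 0 ≤ Tr(A) − Tr(T) ≤ ( 1 + T_{q−1}(γ)^{−1} · ‖Ω̂₂Ω̂₁†‖₂ ) · Tr(Λ₂), where Tr(Λ₂) = Σ_{i=k+1}^n λ_i. -/
/-!
Let `P = Q Qᴴ` and let `R` be the complementary projector `1 - P` written in the eigenbasis `U`
of `A`. Then `Tr A - Tr T = Tr (R Λ) = ∑ λ_i R_ii`, with every `R_ii` in `[0, 1]`; this gives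
realness, nonnegativity, and the bound `Tr Λ₂` for the part of the sum over the last `n - k`
indices.

For the first `k` indices, take `φ(x) = x T_{q-1}((2x - λ_{k+1}) / λ_{k+1})`, a combination of
`x, …, x^q`. The columns of `φ(A) Ω` lie in the range of `Q`, so `R φ(Λ) Uᴴ Ω = 0`
(`projector_mul_poly_eq_zero`). Multiplying on the right by `Ω̂₁†` and reading off the leading
block gives `R₁₁ φ(Λ₁) = - R₁₂ φ(Λ₂) S` with `S = Ω̂₂ Ω̂₁†`, hence
`Tr (R₁₁ Λ₁) = - Tr (φ(Λ₂) · S · Λ₁ φ(Λ₁)⁻¹ R₁₂)`. Here `|φ(x)| ≤ x` on `[0, λ_{k+1}]`, while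
`φ(x) ≥ x T_{q-1}(γ)` for `x ≥ λ_k`, and each column of `R₁₂` has norm at most one. Bounding the
trace diagonal entry by diagonal entry yields `T_{q-1}(γ)⁻¹ ‖S‖₂ Tr Λ₂` (`leading_block_bound`).
-/

open Matrix

/-- Spectral (operator 2-) norm of a complex matrix: the operator norm of the
induced map between Euclidean spaces, i.e. the largest singular value. -/
noncomputable def specNorm {m n : ℕ} (M : Matrix (Fin m) (Fin n) ℂ) : ℝ :=
  ‖LinearMap.toContinuousLinearMap (Matrix.toEuclideanLin M)‖

/-! ### Auxiliary facts -/

/-- Chebyshev polynomials of the first kind are monotone on `[1, ∞)`, since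
`T_m (cosh θ) = cosh (m θ)`. -/
lemma chebyshevT_eval_mono (m : ℤ) {x y : ℝ} (hx : 1 ≤ x) (hxy : x ≤ y) :
    (Polynomial.Chebyshev.T ℝ m).eval x ≤ (Polynomial.Chebyshev.T ℝ m).eval y := by
  have hy : 1 ≤ y := hx.trans hxy
  rw [← Real.cosh_arcosh hx, ← Real.cosh_arcosh hy] at hxy ⊢
  rw [Real.cosh_le_cosh] at hxy
  rw [Polynomial.Chebyshev.T_real_cosh, Polynomial.Chebyshev.T_real_cosh, Real.cosh_le_cosh,
    abs_mul, abs_mul]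
  exact mul_le_mul_of_nonneg_left hxy (abs_nonneg _)

lemma specNorm_nonneg {m n : ℕ} (M : Matrix (Fin m) (Fin n) ℂ) : 0 ≤ specNorm M :=
  norm_nonneg _

lemma norm_mulVec_apply_le {m n : ℕ} (S : Matrix (Fin m) (Fin n) ℂ) (v : Fin n → ℂ)
    (j : Fin m) : ‖(S *ᵥ v) j‖ ≤ specNorm S * √(∑ c, ‖v c‖ ^ 2) := by
  have h := (LinearMap.toContinuousLinearMap (Matrix.toEuclideanLin S)).le_opNorm
    (WithLp.toLp 2 v)
  rw [EuclideanSpace.norm_eq (WithLp.toLp 2 v)] at h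
  refine le_trans ?_ h
  exact PiLp.norm_apply_le (p := 2)
    (LinearMap.toContinuousLinearMap (Matrix.toEuclideanLin S) (WithLp.toLp 2 v)) j

/-- Splitting a sum over `Fin n` into the first `k` and the last `n - k` indices. -/
lemma sum_split {M : Type*} [AddCommMonoid M] {n k : ℕ} (hkn : k < n) (f : Fin n → M) :
    ∑ i, f i = ∑ c : Fin k, f (Fin.castLE hkn.le c) +
      ∑ j : Fin (n - k), f ⟨k + (j : ℕ), by have := j.isLt; omega⟩ := by
  rw [← Equiv.sum_comp (finCongr (show k + (n - k) = n by omega)) f, Fin.sum_univ_add]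
  rfl

/-! ### The complementary projector `1 - W Wᴴ` -/

section Projector

variable {ι κ : Type*} [Fintype ι] [Fintype κ] [DecidableEq ι] [DecidableEq κ]

/-- The diagonal entries of the Hermitian projector `1 - W Wᴴ` are the squared norms of its
rows. -/
lemma projector_diag (W : Matrix ι κ ℂ) (hW : Wᴴ * W = 1) (i : ι) :
    (1 - W * Wᴴ : Matrix ι ι ℂ) i i = ((∑ j, ‖(1 - W * Wᴴ : Matrix ι ι ℂ) i j‖ ^ 2 : ℝ) : ℂ) := by
  set R := 1 - W * Wᴴ with hR
  have hRH : Rᴴ = R := by simp [hR]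
  have hRR : R * Rᴴ = R := by
    rw [hRH]
    have : W * Wᴴ * (W * Wᴴ) = W * Wᴴ := by
      rw [Matrix.mul_assoc, ← Matrix.mul_assoc Wᴴ W, hW, Matrix.one_mul]
    rw [hR, Matrix.sub_mul, Matrix.one_mul, Matrix.mul_sub, Matrix.mul_one, this]
    simp
  conv_lhs => rw [← hRR]
  rw [Matrix.mul_apply]
  push_cast
  refine Finset.sum_congr rfl fun j _ => ?_
  rw [Matrix.conjTranspose_apply, Complex.star_def, Complex.mul_conj, Complex.normSq_eq_norm_sq]
  push_cast
  rfl

lemma projector_diag_le_one (W : Matrix ι κ ℂ) (hW : Wᴴ * W = 1) (i : ι) :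
    ∑ j, ‖(1 - W * Wᴴ : Matrix ι ι ℂ) i j‖ ^ 2 ≤ 1 := by
  have h := congrArg Complex.re (projector_diag W hW i)
  rw [Complex.ofReal_re] at h
  rw [← h, Matrix.sub_apply, Matrix.one_apply_eq, Matrix.mul_apply]
  simp only [Matrix.conjTranspose_apply, Complex.star_def, Complex.mul_conj, Complex.sub_re,
    Complex.one_re, Complex.re_sum, Complex.ofReal_re]
  have : 0 ≤ ∑ c, Complex.normSq (W i c) := Finset.sum_nonneg fun c _ => Complex.normSq_nonneg _
  linarith

lemma projector_mulVec_eq_zero (Q : Matrix ι κ ℂ) (hQ : Qᴴ * Q = 1) (v : ι → ℂ)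
    (hv : v ∈ Submodule.span ℂ (Set.range fun c : κ => fun r => Q r c)) :
    (1 - Q * Qᴴ) *ᵥ v = 0 := by
  have h0 : (1 - Q * Qᴴ) * Q = 0 := by
    rw [Matrix.sub_mul, Matrix.mul_assoc, hQ]; simp
  have : Submodule.span ℂ (Set.range fun c : κ => fun r => Q r c) ≤
      LinearMap.ker (Matrix.mulVecLin (1 - Q * Qᴴ)) := by
    rw [Submodule.span_le]
    rintro _ ⟨c, rfl⟩
    ext r
    exact congrFun (congrFun h0 r) c
  exact this hv

end Projector

/-! ### The trace over the leading eigenvalues -/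

/-- The estimate on the leading block. Here `C` is the off-diagonal block of an orthogonal
projector (so its columns have norm at most one), `r` the diagonal of its leading block, `S = Ω̂₂ Ω̂₁†`, and `h` expresses that the
projector annihilates the columns of `[φ(Λ₁); φ(Λ₂) S]`, where `φ(Λ₁) = diag (a c * t c)` and
`φ(Λ₂) = diag f`. -/
lemma leading_block_bound {k m : ℕ} (S : Matrix (Fin m) (Fin k) ℂ)
    (C : Matrix (Fin k) (Fin m) ℂ) (hC : ∀ j, ∑ c, ‖C c j‖ ^ 2 ≤ 1)
    (a t r : Fin k → ℝ) (f μ : Fin m → ℝ) (τ : ℝ) (hτ : 0 < τ) (ht : ∀ c, τ ≤ t c)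
    (hf : ∀ j, |f j| ≤ μ j)
    (h : ∀ c, (r c : ℂ) * (a c * t c) + ∑ j, C c j * (f j * S j c) = 0) :
    ∑ c, a c * r c ≤ τ⁻¹ * specNorm S * ∑ j, μ j := by
  have ht0 : ∀ c, 0 < t c := fun c => hτ.trans_le (ht c)
  set v : Fin m → Fin k → ℂ := fun j c => ((t c)⁻¹ : ℝ) * C c j with hv
  have hvn : ∀ j, √(∑ c, ‖v j c‖ ^ 2) ≤ τ⁻¹ := by
    intro j
    refine Real.sqrt_le_iff.mpr ⟨(inv_pos.mpr hτ).le, ?_⟩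
    calc ∑ c, ‖v j c‖ ^ 2 ≤ ∑ c, τ⁻¹ ^ 2 * ‖C c j‖ ^ 2 := by
          refine Finset.sum_le_sum fun c _ => ?_
          have h1 : (t c)⁻¹ ≤ τ⁻¹ := inv_anti₀ hτ (ht c)
          have h2 : 0 < (t c)⁻¹ := inv_pos.mpr (ht0 c)
          rw [hv]
          simp only
          rw [norm_mul, Complex.norm_real, Real.norm_of_nonneg h2.le, mul_pow]
          gcongr
      _ ≤ τ⁻¹ ^ 2 := by
          rw [← Finset.mul_sum]
          exact mul_le_of_le_one_right (by positivity) (hC j)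
  have key : ((∑ c, a c * r c : ℝ) : ℂ) = -∑ j, (f j : ℂ) * (S *ᵥ v j) j := by
    have h1 : ∀ c, ((a c * r c : ℝ) : ℂ) = -∑ j, (f j : ℂ) * (S j c * v j c) := by
      intro c
      have hne : (t c : ℂ) ≠ 0 := by exact_mod_cast (ht0 c).ne'
      have h2 : ((a c * r c : ℝ) : ℂ) = (t c : ℂ)⁻¹ * ((r c : ℂ) * (a c * t c)) := by
        push_cast; field_simp
      rw [h2, eq_neg_of_add_eq_zero_left (h c), mul_neg, Finset.mul_sum]
      congr 1
      refine Finset.sum_congr rfl fun j _ => ?_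
      simp only [hv]; push_cast; ring
    rw [Complex.ofReal_sum, Finset.sum_congr rfl fun c _ => h1 c, Finset.sum_neg_distrib,
      Finset.sum_comm]
    congr 1
    refine Finset.sum_congr rfl fun j _ => ?_
    rw [Matrix.mulVec, dotProduct, Finset.mul_sum]
  calc ∑ c, a c * r c ≤ ‖((∑ c, a c * r c : ℝ) : ℂ)‖ := by
        rw [Complex.norm_real]; exact le_abs_self _
    _ ≤ ∑ j, μ j * (specNorm S * τ⁻¹) := by
        rw [key, norm_neg]
        refine (norm_sum_le _ _).trans (Finset.sum_le_sum fun j _ => ?_)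
        rw [norm_mul, Complex.norm_real]
        refine mul_le_mul (hf j) ?_ (norm_nonneg _) ((abs_nonneg _).trans (hf j))
        exact (norm_mulVec_apply_le S (v j) j).trans
          (mul_le_mul_of_nonneg_left (hvn j) (specNorm_nonneg S))
    _ = τ⁻¹ * specNorm S * ∑ j, μ j := by rw [← Finset.sum_mul]; ring

/-! ### The rescaled Chebyshev polynomial -/

/-- The Chebyshev polynomial `T_{q-1}` precomposed with the affine map `x ↦ (2x - b) / b`, which
carries `[0, b]` onto `[-1, 1]` when `0 < b`. -/
noncomputable def scaledCheb (q : ℕ) (b : ℝ) : Polynomial ℝ :=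
  (Polynomial.Chebyshev.T ℝ ((q : ℤ) - 1)).comp
    (Polynomial.C (2 / b) * Polynomial.X - Polynomial.C 1)

lemma scaledCheb_eval (q : ℕ) {b : ℝ} (hb : 0 < b) (x : ℝ) :
    (scaledCheb q b).eval x =
      (Polynomial.Chebyshev.T ℝ ((q : ℤ) - 1)).eval ((2 * x - b) / b) := by
  rw [scaledCheb, Polynomial.eval_comp]
  congr 1
  simp
  field_simp

lemma scaledCheb_natDegree_lt (q : ℕ) (hq : 1 ≤ q) (b : ℝ) : (scaledCheb q b).natDegree < q := by
  have h1 : (Polynomial.C (2 / b) * Polynomial.X - Polynomial.C 1 : Polynomial ℝ).natDegree ≤ 1 := by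
    compute_degree
  have h2 : (scaledCheb q b).natDegree ≤ ((q : ℤ) - 1).natAbs * 1 := by
    rw [scaledCheb, Polynomial.natDegree_comp, Polynomial.Chebyshev.natDegree_T]
    exact Nat.mul_le_mul_left _ h1
  omega

lemma scaledCheb_abs_le_one (q : ℕ) {b x : ℝ} (hb : 0 < b) (hx : 0 ≤ x) (hxb : x ≤ b) :
    |(scaledCheb q b).eval x| ≤ 1 := by
  rw [scaledCheb_eval q hb]
  refine Polynomial.Chebyshev.abs_eval_T_real_le_one _ ?_
  rw [abs_le, le_div_iff₀ hb, div_le_iff₀ hb]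
  constructor <;> linarith

/-! ### Annihilation of the filtered Krylov block -/

/-- The projector onto the complement of the Krylov space, written in the eigenbasis of `A`,
annihilates `φ(Λ) Uᴴ Ω` for each `φ(x) = x p(x)` with `p` of degree less than `q`. -/
lemma projector_mul_poly_eq_zero {n l q : ℕ} {κ : Type*} [Fintype κ] [DecidableEq κ]
    (U : Matrix (Fin n) (Fin n) ℂ) (hU : U * Uᴴ = 1) (lam : Fin n → ℝ)
    (A : Matrix (Fin n) (Fin n) ℂ)
    (hA : A = U * Matrix.diagonal (fun i => (lam i : ℂ)) * Uᴴ)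
    (Ω : Matrix (Fin n) (Fin l) ℂ)
    (Q : Matrix (Fin n) κ ℂ) (hQ : Qᴴ * Q = 1)
    (hspan : ∀ i : Fin q, ∀ j : Fin l,
      (fun r => (A ^ ((i : ℕ) + 1) * Ω) r j) ∈
        Submodule.span ℂ (Set.range fun c : κ => fun r => Q r c))
    (p : Polynomial ℝ) (hp : p.natDegree < q) (i : Fin n) (b : Fin l) :
    ∑ j, (1 - (Uᴴ * Q) * (Uᴴ * Q)ᴴ : Matrix (Fin n) (Fin n) ℂ) i j *
      (((lam j * p.eval (lam j) : ℝ) : ℂ) * (Uᴴ * Ω) j b) = 0 := by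
  have hU' : Uᴴ * U = 1 := mul_eq_one_comm.mp hU
  set D : Matrix (Fin n) (Fin n) ℂ := Matrix.diagonal (fun i => (lam i : ℂ)) with hD
  set R := 1 - (Uᴴ * Q) * (Uᴴ * Q)ᴴ with hR
  have hRU : R * Uᴴ = Uᴴ * (1 - Q * Qᴴ) := by
    rw [hR, Matrix.conjTranspose_mul, Matrix.conjTranspose_conjTranspose, Matrix.sub_mul,
      Matrix.mul_sub, Matrix.one_mul, Matrix.mul_one]
    simp only [Matrix.mul_assoc, hU, Matrix.mul_one]
  have hApow : ∀ e : ℕ, Uᴴ * A ^ e = D ^ e * Uᴴ := by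
    intro e
    induction e with
    | zero => simp
    | succ e ih =>
      rw [pow_succ, ← Matrix.mul_assoc, ih, hA, pow_succ]
      simp only [Matrix.mul_assoc]
      rw [← Matrix.mul_assoc Uᴴ U, hU', Matrix.one_mul]
  have hmono : ∀ e : Fin q, R * (D ^ ((e : ℕ) + 1) * (Uᴴ * Ω)) = 0 := by
    intro e
    rw [← Matrix.mul_assoc (D ^ _), ← hApow, Matrix.mul_assoc, ← Matrix.mul_assoc R, hRU,
      Matrix.mul_assoc]
    have : (1 - Q * Qᴴ) * (A ^ ((e : ℕ) + 1) * Ω) = 0 := by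
      ext r c
      exact congrFun (projector_mulVec_eq_zero Q hQ _ (hspan e c)) r
    rw [this, Matrix.mul_zero]
  have hent : ∀ e : Fin q, ∑ j, R i j * ((lam j : ℂ) ^ ((e : ℕ) + 1) * (Uᴴ * Ω) j b) = 0 := by
    intro e
    have := congrFun (congrFun (hmono e) i) b
    rw [hD, Matrix.diagonal_pow, Matrix.mul_apply] at this
    simpa [Matrix.diagonal_mul] using this
  have hsum : ∀ j, R i j * (((lam j * p.eval (lam j) : ℝ) : ℂ) * (Uᴴ * Ω) j b) =
      ∑ e : Fin q, (p.coeff e : ℂ) * (R i j * ((lam j : ℂ) ^ ((e : ℕ) + 1) * (Uᴴ * Ω) j b)) := by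
    intro j
    rw [Polynomial.eval_eq_sum_range' hp, Finset.sum_range]
    push_cast
    rw [Finset.mul_sum, Finset.sum_mul, Finset.mul_sum]
    refine Finset.sum_congr rfl fun e _ => ?_
    ring
  rw [Finset.sum_congr rfl fun j _ => hsum j, Finset.sum_comm]
  refine Finset.sum_eq_zero fun e _ => ?_
  rw [← Finset.mul_sum, hent e, mul_zero]

/-! ### The structural bound -/

/-- Structural bound for the block Krylov trace estimator (first bound). -/
theorem trace_structural_bound_blockKrylov
    (n k l q : ℕ) (hk : 0 < k) (hkl : k ≤ l) (hln : l ≤ n) (hkn : k < n)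
    (hq : 1 ≤ q) (hql : q * l ≤ n)
    (U : Matrix (Fin n) (Fin n) ℂ) (hU : U * Uᴴ = 1)
    (lam : Fin n → ℝ) (hmono : Antitone lam) (hnn : ∀ i, 0 ≤ lam i)
    (hgapPos : 0 < lam ⟨k, hkn⟩)
    (hgap : lam ⟨k, hkn⟩ < lam ⟨k - 1, by omega⟩)
    (A : Matrix (Fin n) (Fin n) ℂ)
    (hA : A = U * Matrix.diagonal (fun i => (lam i : ℂ)) * Uᴴ)
    (Ω : Matrix (Fin n) (Fin l) ℂ)
    -- `Ω̂₁ = U₁*Ω` and `Ω̂₂ = U₂*Ω` where `U₁`, `U₂` collect the first `k`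
    -- and last `n - k` columns of `U`:
    (Ω1 : Matrix (Fin k) (Fin l) ℂ)
    (hΩ1 : Ω1 = (Matrix.of fun i (j : Fin k) => U i (Fin.castLE hkn.le j))ᴴ * Ω)
    (Ω2 : Matrix (Fin (n - k)) (Fin l) ℂ)
    (hΩ2 : Ω2 = (Matrix.of fun i (j : Fin (n - k)) =>
      U i ⟨k + (j : ℕ), by have := j.isLt; omega⟩)ᴴ * Ω)
    (hrank : IsUnit (Ω1 * Ω1ᴴ))
    -- `Q` is an orthonormal basis matrix of the block Krylov space:
    (Q : Matrix (Fin n) (Fin (q * l)) ℂ) (hQ : Qᴴ * Q = 1)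
    (hspan : ∀ i : Fin q, ∀ j : Fin l,
      (fun r => (A ^ ((i : ℕ) + 1) * Ω) r j) ∈
        Submodule.span ℂ (Set.range fun c : Fin (q * l) => fun r => Q r c))
    (T : Matrix (Fin (q * l)) (Fin (q * l)) ℂ) (hT : T = Qᴴ * A * Q) :
    let lamk : ℝ := lam ⟨k - 1, by omega⟩
    let lamk1 : ℝ := lam ⟨k, hkn⟩
    let γ : ℝ := (2 * lamk - lamk1) / lamk1
    let Tq : ℝ := (Polynomial.Chebyshev.T ℝ ((q : ℤ) - 1)).eval γ
    let pinv : Matrix (Fin l) (Fin k) ℂ := Ω1ᴴ * (Ω1 * Ω1ᴴ)⁻¹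
    let trL2 : ℝ := ∑ i ∈ Finset.univ.filter fun i : Fin n => k ≤ (i : ℕ), lam i
    (A.trace - T.trace).im = 0 ∧ 0 ≤ (A.trace - T.trace).re ∧
      (A.trace - T.trace).re ≤ (1 + Tq⁻¹ * specNorm (Ω2 * pinv)) * trL2 := by
  intro lamk lamk1 γ Tq pinv trL2
  have hU' : Uᴴ * U = 1 := mul_eq_one_comm.mp hU
  set W : Matrix (Fin n) (Fin (q * l)) ℂ := Uᴴ * Q with hWdef
  have hW : Wᴴ * W = 1 := by
    rw [hWdef, Matrix.conjTranspose_mul, Matrix.conjTranspose_conjTranspose, Matrix.mul_assoc,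
      ← Matrix.mul_assoc U, hU, Matrix.one_mul, hQ]
  set R := 1 - W * Wᴴ with hR
  set r : Fin n → ℝ := fun i => ∑ j, ‖R i j‖ ^ 2 with hr
  have hRd : ∀ i, R i i = (r i : ℂ) := fun i => projector_diag W hW i
  have hr1 : ∀ i, r i ≤ 1 := fun i => projector_diag_le_one W hW i
  have hr0 : ∀ i, 0 ≤ r i := fun i => Finset.sum_nonneg fun j _ => by positivity
  have hRsymm : ∀ i j, ‖R i j‖ = ‖R j i‖ := by
    intro i j
    have hRH : Rᴴ = R := by simp [hR]
    conv_lhs => rw [← hRH]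
    rw [Matrix.conjTranspose_apply, norm_star]
  have htrace : A.trace - T.trace = ((∑ i, lam i * r i : ℝ) : ℂ) := by
    have h1 : A.trace = (Matrix.diagonal (fun i => (lam i : ℂ))).trace := by
      rw [hA, Matrix.trace_mul_comm, ← Matrix.mul_assoc, hU', Matrix.one_mul]
    have h2 : T.trace = (Matrix.diagonal (fun i => (lam i : ℂ)) * (W * Wᴴ)).trace := by
      have : T = Wᴴ * (Matrix.diagonal (fun i => (lam i : ℂ)) * W) := by
        rw [hT, hA, hWdef, Matrix.conjTranspose_mul, Matrix.conjTranspose_conjTranspose]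
        simp only [Matrix.mul_assoc]
      rw [this, Matrix.trace_mul_comm, Matrix.mul_assoc]
    have h3 : A.trace - T.trace = (Matrix.diagonal (fun i => (lam i : ℂ)) * R).trace := by
      rw [h1, h2, hR, Matrix.mul_sub, Matrix.mul_one, Matrix.trace_sub]
    rw [h3, Matrix.trace]
    push_cast
    refine Finset.sum_congr rfl fun i _ => ?_
    rw [Matrix.diag_apply, Matrix.diagonal_mul, hRd]
  rw [htrace, Complex.ofReal_re, Complex.ofReal_im]
  refine ⟨rfl, Finset.sum_nonneg fun i _ => mul_nonneg (hnn i) (hr0 i), ?_⟩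
  set e1 : Fin k → Fin n := fun c => Fin.castLE hkn.le c with he1
  set e2 : Fin (n - k) → Fin n := fun j => ⟨k + (j : ℕ), by have := j.isLt; omega⟩ with he2
  have htrL2 : trL2 = ∑ j, lam (e2 j) := by
    simp only [trL2]
    rw [Finset.sum_filter, sum_split hkn]
    have h0 : ∀ c : Fin k, ¬ k ≤ (c : ℕ) := fun c => c.isLt.not_ge
    simp [h0, he2]
  set p := scaledCheb q lamk1 with hp
  have hTq : 1 ≤ Tq := by
    refine Polynomial.Chebyshev.one_le_eval_T_real _ ?_
    rw [le_div_iff₀ hgapPos]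
    simp only [lamk, lamk1]
    linarith
  -- The columns of `Uᴴ Ω Ω̂₁†` are those of the stacked matrix `[I; Ω̂₂ Ω̂₁†]`.
  have hY1 : ∀ c d, (Uᴴ * Ω * pinv) (e1 d) c = if d = c then 1 else 0 := by
    intro c d
    have h1 : (Uᴴ * Ω * pinv) (e1 d) c = (Ω1 * pinv) d c := by
      rw [hΩ1]; rfl
    have h2 : Ω1 * pinv = 1 := by
      rw [← Matrix.mul_assoc]
      exact Matrix.mul_nonsing_inv _ ((Matrix.isUnit_iff_isUnit_det _).mp hrank)
    rw [h1, h2, Matrix.one_apply]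
  have hY2 : ∀ c j, (Uᴴ * Ω * pinv) (e2 j) c = (Ω2 * pinv) j c := by
    intro c j
    rw [hΩ2]; rfl
  have hann : ∀ i c, ∑ j, R i j * (((lam j * p.eval (lam j) : ℝ) : ℂ) *
      (Uᴴ * Ω * pinv) j c) = 0 := by
    intro i c
    have h1 : ∀ j, R i j * (((lam j * p.eval (lam j) : ℝ) : ℂ) * (Uᴴ * Ω * pinv) j c) =
        ∑ b, (R i j * (((lam j * p.eval (lam j) : ℝ) : ℂ) * (Uᴴ * Ω) j b)) * pinv b c := by
      intro j
      rw [Matrix.mul_apply, Finset.mul_sum, Finset.mul_sum]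
      exact Finset.sum_congr rfl fun b _ => by ring
    rw [Finset.sum_congr rfl fun j _ => h1 j, Finset.sum_comm]
    refine Finset.sum_eq_zero fun b _ => ?_
    rw [← Finset.sum_mul, projector_mul_poly_eq_zero U hU lam A hA Ω Q hQ hspan p
      (scaledCheb_natDegree_lt q hq lamk1) i b, zero_mul]
  have hlead : ∑ c, lam (e1 c) * r (e1 c) ≤
      Tq⁻¹ * specNorm (Ω2 * pinv) * ∑ j, lam (e2 j) := by
    refine leading_block_bound (Ω2 * pinv) (fun c j => R (e1 c) (e2 j)) ?_
      (fun c => lam (e1 c)) (fun c => p.eval (lam (e1 c))) (fun c => r (e1 c))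
      (fun j => lam (e2 j) * p.eval (lam (e2 j))) (fun j => lam (e2 j)) Tq (by linarith) ?_ ?_ ?_
    · intro j
      refine le_trans ?_ (hr1 (e2 j))
      simp only [hr]
      rw [sum_split hkn fun i => ‖R (e2 j) i‖ ^ 2]
      simp only [hRsymm (e1 _) (e2 j)]
      exact le_add_of_nonneg_right (Finset.sum_nonneg fun _ _ => by positivity)
    · intro c
      rw [hp, scaledCheb_eval q hgapPos]
      have hle : lamk ≤ lam (e1 c) := hmono (by
        rw [Fin.le_def]; have := c.isLt; simp [he1]; omega)
      refine chebyshevT_eval_mono _ ?_ ?_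
      · rw [le_div_iff₀ hgapPos]
        simp only [lamk, lamk1]
        linarith
      · exact div_le_div_of_nonneg_right (by linarith) hgapPos.le
    · intro j
      have hle : lam (e2 j) ≤ lamk1 := hmono (by rw [Fin.le_def]; simp [he2])
      rw [abs_mul, abs_of_nonneg (hnn _)]
      exact mul_le_of_le_one_right (hnn _)
        (scaledCheb_abs_le_one q hgapPos (hnn _) hle)
    · intro c
      have h := hann (e1 c) c
      rw [sum_split hkn] at h
      change ∑ d, R (e1 c) (e1 d) * (((lam (e1 d) * p.eval (lam (e1 d)) : ℝ) : ℂ) *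
          (Uᴴ * Ω * pinv) (e1 d) c) + ∑ j, R (e1 c) (e2 j) *
          (((lam (e2 j) * p.eval (lam (e2 j)) : ℝ) : ℂ) * (Uᴴ * Ω * pinv) (e2 j) c) = 0 at h
      simp only [hY1, hY2, mul_ite, mul_one, mul_zero, Finset.sum_ite_eq', Finset.mem_univ,
        if_true, hRd] at h
      rw [← h]
      push_cast
      rfl
  have htail : ∑ j, lam (e2 j) * r (e2 j) ≤ ∑ j, lam (e2 j) :=
    Finset.sum_le_sum fun j _ => mul_le_of_le_one_right (hnn _) (hr1 _)
  rw [sum_split hkn, htrL2, add_mul, one_mul, add_comm]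
  exact add_le_add htail hlead
end

section
/- Structural bound for the block Krylov trace estimator (Theorem 5, second bound): under the stated assumptions, the quantity Tr(A) − Tr(T) is real and satisfies 0 ≤ Tr(A) − Tr(T) ≤ ( 1 + (λ_{k+1}/λ_k) · T_{q−1}(γ)^{−2} · ‖Ω̂₂Ω̂₁†‖₂² ) · Tr(Λ₂), where Tr(Λ₂) = Σ_{i=k+1}^n λ_i. -/
/-!
The trace gap is `∑ i, λ i ‖R u i‖²`, where `u i` are the eigenvectors (indices start at `0`) and `R = 1 - Q Qᴴ` projects
onto the orthogonal complement of the Krylov space (`trace_gap_eq`); this makes it real and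
nonnegative. For `i ≥ k` the bound `‖R u i‖ ≤ 1` already produces `Tr Λ₂`.

For `i < k`, let `f x = x p x` with `p` the Chebyshev polynomial `T_{q-1}` rescaled so that
`[0, λ k]` becomes `[-1, 1]` (`exists_filter_poly`). Since `f` has degree at most `q` and no
constant term, `R f(A) Ω = 0` (`resid_filter_eq_zero`). Put `H = Ω̂₂ Ω̂₁†`. As `Uᴴ Ω Ω̂₁†` is the
identity stacked on `H`, the `i`-th column of `f(A) Ω Ω̂₁†` is `f(λ i) u i` plus
`∑_{j ≥ k} f(λ j) H j i • u j`, so `R u i` equals, up to sign, `R` applied to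
`∑_{j ≥ k} (f(λ j) / f(λ i)) H j i • u j` (`col_sq_le`). The estimates `|p| ≤ 1` on the small
eigenvalues and `|p| ≥ T_{q-1}(γ)` on the large ones, together with the bound of each squared row
norm of `H` by `‖H‖₂²` (`row_sum_sq_le_specNorm_sq`), give the remaining term after summation.
No inverse of a Gram matrix of the filtered basis is needed: only the residuals of the
individual eigenvectors enter.
-/

open Matrix

/-! ### Sums of squares and the operator norm -/

theorem star_dotProduct_self {m : ℕ} (v : Fin m → ℂ) :
    star v ⬝ᵥ v = ((∑ r, ‖v r‖ ^ 2 : ℝ) : ℂ) := by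
  simp [dotProduct, Complex.conj_mul']

theorem sum_sq_mulVec_of_isometry {m p : ℕ} (V : Matrix (Fin m) (Fin p) ℂ) (hV : Vᴴ * V = 1)
    (v : Fin p → ℂ) : ∑ r, ‖(V *ᵥ v) r‖ ^ 2 = ∑ r, ‖v r‖ ^ 2 := by
  have h : star (V *ᵥ v) ⬝ᵥ (V *ᵥ v) = star v ⬝ᵥ v := by
    rw [star_mulVec, ← dotProduct_mulVec, mulVec_mulVec, hV, one_mulVec]
  rw [star_dotProduct_self, star_dotProduct_self] at h
  exact_mod_cast h

/-- `1 - Q Qᴴ` is an orthogonal projection. -/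
theorem resid_gram {m p : ℕ} (Q : Matrix (Fin m) (Fin p) ℂ) (hQ : Qᴴ * Q = 1) :
    (1 - Q * Qᴴ)ᴴ * (1 - Q * Qᴴ) = 1 - Q * Qᴴ := by
  have : Q * Qᴴ * (Q * Qᴴ) = Q * Qᴴ := by
    rw [Matrix.mul_assoc, ← Matrix.mul_assoc Qᴴ, hQ, Matrix.one_mul]
  simp [Matrix.mul_sub, Matrix.sub_mul, this]

theorem sum_sq_resid_mulVec_le {m p : ℕ} (Q : Matrix (Fin m) (Fin p) ℂ) (hQ : Qᴴ * Q = 1)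
    (v : Fin m → ℂ) : ∑ r, ‖((1 - Q * Qᴴ) *ᵥ v) r‖ ^ 2 ≤ ∑ r, ‖v r‖ ^ 2 := by
  have h : star ((1 - Q * Qᴴ) *ᵥ v) ⬝ᵥ ((1 - Q * Qᴴ) *ᵥ v) + star (Qᴴ *ᵥ v) ⬝ᵥ (Qᴴ *ᵥ v)
      = star v ⬝ᵥ v := by
    rw [star_mulVec, ← dotProduct_mulVec, mulVec_mulVec, resid_gram Q hQ, star_mulVec,
      ← dotProduct_mulVec, mulVec_mulVec, conjTranspose_conjTranspose, sub_mulVec, one_mulVec,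
      dotProduct_sub]
    ring
  simp only [star_dotProduct_self] at h
  have h' : ∑ r, ‖((1 - Q * Qᴴ) *ᵥ v) r‖ ^ 2 + ∑ r, ‖(Qᴴ *ᵥ v) r‖ ^ 2 = ∑ r, ‖v r‖ ^ 2 := by
    exact_mod_cast h
  have : 0 ≤ ∑ r, ‖(Qᴴ *ᵥ v) r‖ ^ 2 := by positivity
  linarith

/-- Evaluating `M` at the conjugate of its `j`-th row gives a vector whose `j`-th coordinate is the
squared norm of that row. -/
theorem row_sum_sq_le_specNorm_sq {m p : ℕ} (M : Matrix (Fin m) (Fin p) ℂ) (j : Fin m) :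
    ∑ i, ‖M j i‖ ^ 2 ≤ specNorm M ^ 2 := by
  set x : EuclideanSpace ℂ (Fin p) := WithLp.toLp 2 (fun i => star (M j i)) with hx
  have hxn : ‖x‖ ^ 2 = ∑ i, ‖M j i‖ ^ 2 := by
    rw [EuclideanSpace.norm_sq_eq]; simp [hx]
  have h1 := (LinearMap.toContinuousLinearMap (Matrix.toEuclideanLin M)).le_opNorm x
  have h2 := PiLp.norm_apply_le (LinearMap.toContinuousLinearMap (Matrix.toEuclideanLin M) x) j
  have h3 : (LinearMap.toContinuousLinearMap (Matrix.toEuclideanLin M) x).ofLp j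
      = ((∑ i, ‖M j i‖ ^ 2 : ℝ) : ℂ) := by
    simp [hx, mulVec, dotProduct, Complex.mul_conj']
  rw [h3, Complex.norm_real, ← hxn, Real.norm_of_nonneg (by positivity)] at h2
  rw [← hxn]
  change _ ≤ specNorm M * ‖x‖ at h1
  have h4 := h2.trans h1
  rcases (norm_nonneg x).eq_or_lt with h0 | h0
  · rw [← h0, zero_pow two_ne_zero]; exact sq_nonneg _
  · have : ‖x‖ ≤ specNorm M := by nlinarith
    gcongr

/-- If a contraction `G` annihilates `∑ j, f j • h j • e j`, where `h` agrees with the basis vector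
`e i` on the first `k` coordinates, then `G e i = -∑_{j ≥ k} (f j / f i) h j • G e j`, which bounds
the `i`-th column of `G` by the size of the tail of `h`. -/
theorem col_sq_le {n k : ℕ} (G : Matrix (Fin n) (Fin n) ℂ)
    (hG : ∀ v : Fin n → ℂ, ∑ r, ‖(G *ᵥ v) r‖ ^ 2 ≤ ∑ r, ‖v r‖ ^ 2)
    (f : Fin n → ℝ) (h : Fin n → ℂ) (i : Fin n) (hi : (i : ℕ) < k) (hf : f i ≠ 0)
    (h1 : h i = 1) (h0 : ∀ j : Fin n, (j : ℕ) < k → j ≠ i → h j = 0)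
    (hGf : G *ᵥ (fun j => (f j : ℂ) * h j) = 0) :
    ∑ r, ‖G r i‖ ^ 2 ≤ ∑ j ∈ Finset.univ.filter fun j : Fin n => k ≤ (j : ℕ), f j ^ 2 / f i ^ 2 * ‖h j‖ ^ 2 := by
  have hfc : (f i : ℂ) ≠ 0 := by exact_mod_cast hf
  have hcol : ∀ r, G r i
      = (G *ᵥ (Pi.single i 1 - (f i : ℂ)⁻¹ • (fun j => (f j : ℂ) * h j))) r := by
    intro r
    rw [mulVec_sub, mulVec_smul, hGf]
    simp
  simp_rw [hcol]
  refine (hG _).trans (le_of_eq ?_)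
  rw [Finset.sum_filter]
  refine Finset.sum_congr rfl fun j _ => ?_
  by_cases hj : j = i
  · subst hj
    simp [h1, hfc, hi]
  · by_cases hjk : k ≤ (j : ℕ)
    · simp [hj, hjk, mul_pow]
      field_simp
    · simp [hj, hjk, h0 j (by omega) hj]

/-! ### Chebyshev filter -/

open Polynomial in
theorem cheb_mono (m : ℤ) {x y : ℝ} (hx : 1 ≤ x) (hxy : x ≤ y) :
    (Chebyshev.T ℝ m).eval x ≤ (Chebyshev.T ℝ m).eval y := by
  -- `T_m (cosh θ) = cosh (m θ)`, and `cosh` is increasing in `|m θ|`.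
  rw [← Real.cosh_arcosh hx, ← Real.cosh_arcosh (hx.trans hxy), Chebyshev.T_real_cosh,
    Chebyshev.T_real_cosh, Real.cosh_le_cosh, abs_mul, abs_mul,
    abs_of_nonneg (Real.arcosh_nonneg hx), abs_of_nonneg (Real.arcosh_nonneg (hx.trans hxy))]
  gcongr
  exact (Real.arcosh_le_arcosh (by linarith) (by linarith)).2 hxy

open Polynomial in
/-- Witnessed by `T_{q-1}` composed with the affine map sending `[0, b]` onto `[-1, 1]`; the lower
bound beyond `a` holds because `T_{q-1}` is increasing on `[1, ∞)`. -/
theorem exists_filter_poly (q : ℕ) (hq : 1 ≤ q) (a b : ℝ) (hb : 0 < b) (hab : b < a) :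
    ∃ p : ℝ[X], p.natDegree < q ∧
      (∀ x, 0 ≤ x → x ≤ b → p.eval x ^ 2 ≤ 1) ∧
      (∀ x, a ≤ x → (Chebyshev.T ℝ ((q : ℤ) - 1)).eval ((2 * a - b) / b) ^ 2 ≤ p.eval x ^ 2) := by
  refine ⟨(Chebyshev.T ℝ ((q : ℤ) - 1)).comp (C (2 / b) * X - C 1), ?_, ?_, ?_⟩
  · have h1 : (C (2 / b) * X - C 1 : ℝ[X]).natDegree ≤ 1 := by compute_degree
    have h2 : (Chebyshev.T ℝ ((q : ℤ) - 1)).natDegree = q - 1 := by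
      rw [Chebyshev.natDegree_T]; omega
    have h3 := natDegree_comp_le (p := Chebyshev.T ℝ ((q : ℤ) - 1))
      (q := (C (2 / b) * X - C 1 : ℝ[X]))
    rw [h2] at h3
    have := Nat.mul_le_mul_left (q - 1) h1
    omega
  · intro x hx0 hxb
    rw [sq_le_one_iff_abs_le_one]
    simp only [eval_comp, eval_sub, eval_mul, eval_C, eval_X]
    apply Chebyshev.abs_eval_T_real_le_one
    have h1 : 2 / b * x - 1 = (2 * x - b) / b := by field_simp
    rw [h1, abs_le, le_div_iff₀ hb, div_le_iff₀ hb]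
    constructor <;> linarith
  · intro x hx
    have hg : 1 ≤ (2 * a - b) / b := by rw [le_div_iff₀ hb]; linarith
    have h0 := Chebyshev.one_le_eval_T_real ((q : ℤ) - 1) hg
    simp only [eval_comp, eval_sub, eval_mul, eval_C, eval_X]
    have h1 : 2 / b * x - 1 = (2 * x - b) / b := by field_simp
    rw [h1]
    have := cheb_mono ((q : ℤ) - 1) hg (y := (2 * x - b) / b) (by gcongr)
    gcongr

/-! ### Residuals of the Krylov space -/

/-- The trace gap is a `λ`-weighted sum of the squared residuals of the eigenvectors. -/
theorem trace_gap_eq {n p : ℕ} (U : Matrix (Fin n) (Fin n) ℂ)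
    (lam : Fin n → ℝ) (Q : Matrix (Fin n) (Fin p) ℂ) (hQ : Qᴴ * Q = 1) :
    (U * diagonal (fun i => (lam i : ℂ)) * Uᴴ).trace
      - (Qᴴ * (U * diagonal (fun i => (lam i : ℂ)) * Uᴴ) * Q).trace
      = ((∑ i, lam i * ∑ r, ‖((1 - Q * Qᴴ) * U : Matrix (Fin n) (Fin n) ℂ) r i‖ ^ 2 : ℝ) : ℂ) := by
  set D := diagonal (fun i => (lam i : ℂ))
  set R := 1 - Q * Qᴴ with hR
  have h1 : (U * D * Uᴴ).trace - (Qᴴ * (U * D * Uᴴ) * Q).trace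
      = (D * ((R * U)ᴴ * (R * U))).trace := by
    have : (R * U)ᴴ * (R * U) = Uᴴ * R * U := by
      rw [conjTranspose_mul, Matrix.mul_assoc, ← Matrix.mul_assoc Rᴴ, resid_gram Q hQ,
        Matrix.mul_assoc]
    have e1 : (D * (Uᴴ * R * U)).trace = (U * D * Uᴴ * R).trace := by
      rw [← Matrix.mul_assoc, trace_mul_comm]
      simp only [Matrix.mul_assoc]
    rw [this, e1, hR, Matrix.mul_sub, trace_sub, Matrix.mul_one, Matrix.mul_assoc Qᴴ,
      trace_mul_comm Qᴴ, Matrix.mul_assoc (U * D * Uᴴ)]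
  rw [h1]
  simp only [trace, D, diag_apply, diagonal_mul]
  push_cast
  refine Finset.sum_congr rfl fun i _ => ?_
  rw [Matrix.mul_apply]
  simp [Complex.conj_mul']

/-- The residual projector annihilates every column of `A^{i+1} Ω`, so in eigencoordinates it
annihilates `f(Λ) Uᴴ Ω` for each polynomial `f(x) = x p(x)` with `p` of degree less than `q`. -/
theorem resid_filter_eq_zero {n l q p : ℕ} (U : Matrix (Fin n) (Fin n) ℂ) (hU : U * Uᴴ = 1)
    (lam : Fin n → ℝ) (Ω : Matrix (Fin n) (Fin l) ℂ)
    (Q : Matrix (Fin n) (Fin p) ℂ) (hQ : Qᴴ * Q = 1)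
    (hspan : ∀ i : Fin q, ∀ j : Fin l,
      (fun r => ((U * diagonal (fun i => (lam i : ℂ)) * Uᴴ) ^ ((i : ℕ) + 1) * Ω) r j) ∈
        Submodule.span ℂ (Set.range fun c : Fin p => fun r => Q r c))
    (P : Polynomial ℝ) (hP : P.natDegree < q) (c : Fin l → ℂ) :
    ((1 - Q * Qᴴ) * U) *ᵥ
      (fun j => ((lam j * P.eval (lam j) : ℝ) : ℂ) * ((Uᴴ * Ω) *ᵥ c) j) = 0 := by
  set D := diagonal (fun i => (lam i : ℂ)) with hD
  set R := 1 - Q * Qᴴ with hR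
  have hRQ : R * Q = 0 := by
    rw [hR, Matrix.sub_mul, Matrix.mul_assoc, hQ]; simp
  have hker : ∀ v ∈ Submodule.span ℂ (Set.range fun c : Fin p => fun r => Q r c),
      R *ᵥ v = 0 := by
    intro v hv
    have : Submodule.span ℂ (Set.range fun c : Fin p => fun r => Q r c)
        ≤ LinearMap.ker R.mulVecLin := by
      rw [Submodule.span_le]
      rintro _ ⟨c, rfl⟩
      ext r
      exact congrFun (congrFun hRQ r) c
    exact this hv
  have hUU : Uᴴ * U = 1 := mul_eq_one_comm.mp hU
  have hpow : ∀ m : ℕ, (U * D * Uᴴ) ^ m = U * D ^ m * Uᴴ := by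
    intro m
    induction m with
    | zero => simp [hU]
    | succ m ih =>
      rw [pow_succ, ih, pow_succ]
      simp only [Matrix.mul_assoc]
      rw [← Matrix.mul_assoc Uᴴ U, hUU, Matrix.one_mul]
  have hz : ∀ m < q, (R * U) *ᵥ (fun j => (lam j : ℂ) ^ (m + 1) * ((Uᴴ * Ω) *ᵥ c) j) = 0 := by
    intro m hm
    have h1 : R * ((U * D * Uᴴ) ^ (m + 1) * Ω) = 0 := by
      ext r j
      exact congrFun (hker _ (hspan ⟨m, hm⟩ j)) r
    have h2 : (fun j => (lam j : ℂ) ^ (m + 1) * ((Uᴴ * Ω) *ᵥ c) j)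
        = D ^ (m + 1) *ᵥ ((Uᴴ * Ω) *ᵥ c) := by
      ext j
      rw [hD, diagonal_pow, mulVec_diagonal]
      rfl
    rw [h2, mulVec_mulVec, mulVec_mulVec]
    have h3 : R * U * D ^ (m + 1) * (Uᴴ * Ω) = 0 := by
      rw [← h1, hpow]
      simp only [Matrix.mul_assoc]
    rw [h3, zero_mulVec]
  have hsum : (fun j => ((lam j * P.eval (lam j) : ℝ) : ℂ) * ((Uᴴ * Ω) *ᵥ c) j)
      = ∑ m ∈ Finset.range q, ((P.coeff m : ℝ) : ℂ) •
        (fun j => (lam j : ℂ) ^ (m + 1) * ((Uᴴ * Ω) *ᵥ c) j) := by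
    ext j
    rw [Polynomial.eval_eq_sum_range' hP, Finset.sum_apply]
    push_cast
    rw [Finset.mul_sum, Finset.sum_mul]
    refine Finset.sum_congr rfl fun m _ => ?_
    simp only [Pi.smul_apply, smul_eq_mul]
    ring
  rw [hsum, mulVec_sum]
  refine Finset.sum_eq_zero fun m hm => ?_
  rw [mulVec_smul, hz m (Finset.mem_range.1 hm), smul_zero]

/-! ### The trace bound -/

/-- Structural bound for the block Krylov trace estimator (second bound). -/
theorem trace_structural_bound_blockKrylov_second
    (n k l q : ℕ) (hk : 0 < k) (hkl : k ≤ l) (hln : l ≤ n) (hkn : k < n)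
    (hq : 1 ≤ q) (hql : q * l ≤ n)
    (U : Matrix (Fin n) (Fin n) ℂ) (hU : U * Uᴴ = 1)
    (lam : Fin n → ℝ) (hmono : Antitone lam) (hnn : ∀ i, 0 ≤ lam i)
    (hgapPos : 0 < lam ⟨k, hkn⟩)
    (hgap : lam ⟨k, hkn⟩ < lam ⟨k - 1, by omega⟩)
    (A : Matrix (Fin n) (Fin n) ℂ)
    (hA : A = U * Matrix.diagonal (fun i => (lam i : ℂ)) * Uᴴ)
    (Ω : Matrix (Fin n) (Fin l) ℂ)
    -- `Ω̂₁ = U₁*Ω` and `Ω̂₂ = U₂*Ω` where `U₁`, `U₂` collect the first `k`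
    -- and last `n - k` columns of `U`:
    (Ω1 : Matrix (Fin k) (Fin l) ℂ)
    (hΩ1 : Ω1 = (Matrix.of fun i (j : Fin k) => U i (Fin.castLE hkn.le j))ᴴ * Ω)
    (Ω2 : Matrix (Fin (n - k)) (Fin l) ℂ)
    (hΩ2 : Ω2 = (Matrix.of fun i (j : Fin (n - k)) =>
      U i ⟨k + (j : ℕ), by have := j.isLt; omega⟩)ᴴ * Ω)
    (hrank : IsUnit (Ω1 * Ω1ᴴ))
    -- `Q` is an orthonormal basis matrix of the block Krylov space:
    (Q : Matrix (Fin n) (Fin (q * l)) ℂ) (hQ : Qᴴ * Q = 1)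
    (hspan : ∀ i : Fin q, ∀ j : Fin l,
      (fun r => (A ^ ((i : ℕ) + 1) * Ω) r j) ∈
        Submodule.span ℂ (Set.range fun c : Fin (q * l) => fun r => Q r c))
    (T : Matrix (Fin (q * l)) (Fin (q * l)) ℂ) (hT : T = Qᴴ * A * Q) :
    let lamk : ℝ := lam ⟨k - 1, by omega⟩
    let lamk1 : ℝ := lam ⟨k, hkn⟩
    let γ : ℝ := (2 * lamk - lamk1) / lamk1
    let Tq : ℝ := (Polynomial.Chebyshev.T ℝ ((q : ℤ) - 1)).eval γ
    let pinv : Matrix (Fin l) (Fin k) ℂ := Ω1ᴴ * (Ω1 * Ω1ᴴ)⁻¹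
    let trL2 : ℝ := ∑ i ∈ Finset.univ.filter fun i : Fin n => k ≤ (i : ℕ), lam i
    (A.trace - T.trace).im = 0 ∧ 0 ≤ (A.trace - T.trace).re ∧
      (A.trace - T.trace).re ≤
        (1 + lamk1 / lamk * (Tq ^ 2)⁻¹ * specNorm (Ω2 * pinv) ^ 2) * trL2 := by
  intro lamk lamk1 γ Tq pinv trL2
  subst hA
  rw [hT, trace_gap_eq U lam Q hQ]
  set G := (1 - Q * Qᴴ) * U with hGdef
  have hUU : Uᴴ * U = 1 := mul_eq_one_comm.mp hU
  have hG : ∀ v : Fin n → ℂ, ∑ r, ‖(G *ᵥ v) r‖ ^ 2 ≤ ∑ r, ‖v r‖ ^ 2 := by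
    intro v
    rw [hGdef, ← mulVec_mulVec, ← sum_sq_mulVec_of_isometry U hUU v]
    exact sum_sq_resid_mulVec_le Q hQ _
  refine ⟨Complex.ofReal_im _, ?_, ?_⟩
  · rw [Complex.ofReal_re]
    exact Finset.sum_nonneg fun i _ => mul_nonneg (hnn i) (by positivity)
  rw [Complex.ofReal_re]
  obtain ⟨P, hPdeg, hPle, hPge⟩ := exists_filter_poly q hq lamk lamk1 hgapPos hgap
  have hγ : 1 ≤ γ := by
    have h1 : (0 : ℝ) < lamk1 := hgapPos
    have h2 : lamk1 < lamk := hgap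
    change 1 ≤ (2 * lamk - lamk1) / lamk1
    rw [le_div_iff₀ h1]; linarith
  have hTq : 1 ≤ Tq := Polynomial.Chebyshev.one_le_eval_T_real _ hγ
  have hlamk1 : 0 < lamk1 := hgapPos
  have hlamk : 0 < lamk := hlamk1.trans hgap
  have hlow : ∀ i : Fin n, (i : ℕ) < k → lamk ≤ lam i := fun i hi =>
    hmono (Fin.mk_le_mk.2 (by omega) : i ≤ ⟨k - 1, by omega⟩)
  have hhigh : ∀ j : Fin n, k ≤ (j : ℕ) → lam j ≤ lamk1 := fun j hj =>
    hmono (Fin.mk_le_mk.2 hj : (⟨k, hkn⟩ : Fin n) ≤ j)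
  -- `W = Uᴴ Ω Ω̂₁†` stacks the identity on top of `Ω̂₂ Ω̂₁†`.
  set W : Matrix (Fin n) (Fin k) ℂ := Uᴴ * Ω * pinv with hW
  have hdet : IsUnit (Ω1 * Ω1ᴴ).det := (Matrix.isUnit_iff_isUnit_det _).1 hrank
  have hpinv : Ω1 * pinv = 1 := by
    change Ω1 * (Ω1ᴴ * (Ω1 * Ω1ᴴ)⁻¹) = 1
    rw [← Matrix.mul_assoc, Matrix.mul_nonsing_inv _ hdet]
  have hW1 : ∀ (j : Fin n) (hj : (j : ℕ) < k) (i : Fin k),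
      W j i = (1 : Matrix (Fin k) (Fin k) ℂ) ⟨j, hj⟩ i := by
    intro j hj i
    rw [← hpinv, hΩ1]
    rfl
  have hW2 : ∀ (j : Fin n) (hj : k ≤ (j : ℕ)) (i : Fin k),
      W j i = (Ω2 * pinv) ⟨j - k, by omega⟩ i := by
    intro j hj i
    have hjj : j = ⟨k + ((j : ℕ) - k), by omega⟩ := Fin.ext (by simp; omega)
    conv_lhs => rw [hjj]
    rw [hΩ2]
    rfl
  set S := specNorm (Ω2 * pinv) ^ 2 with hS
  have hrow : ∀ j : Fin n, k ≤ (j : ℕ) → ∑ i, ‖W j i‖ ^ 2 ≤ S := by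
    intro j hj
    simp_rw [hW2 j hj]
    exact row_sum_sq_le_specNorm_sq _ _
  have hlead : ∀ i : Fin k, lam (Fin.castLE hkn.le i) * ∑ r, ‖G r (Fin.castLE hkn.le i)‖ ^ 2
      ≤ ∑ j ∈ Finset.univ.filter fun j : Fin n => k ≤ (j : ℕ), lamk1 / lamk * (Tq ^ 2)⁻¹ * lam j * ‖W j i‖ ^ 2 := by
    intro i
    set i' : Fin n := Fin.castLE hkn.le i with hi'
    have hik : (i' : ℕ) < k := i.isLt
    have hli : lamk ≤ lam i' := hlow i' hik
    have hli0 : 0 < lam i' := hlamk.trans_le hli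
    have hPi : Tq ^ 2 ≤ P.eval (lam i') ^ 2 := hPge _ hli
    have hTq2 : 0 < Tq ^ 2 := by positivity
    have hPi0 : P.eval (lam i') ≠ 0 := fun h => by
      rw [h] at hPi; simp at hPi; linarith
    have hz := resid_filter_eq_zero U hU lam Ω Q hQ hspan P hPdeg (fun a => pinv a i)
    have hcol := col_sq_le (k := k) G hG (fun j => lam j * P.eval (lam j)) (fun j => W j i) i' hik
      (mul_ne_zero hli0.ne' hPi0) (by rw [hW1 i' hik]; exact one_apply_eq i)
      (fun j hj hne => by
        rw [hW1 j hj]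
        exact one_apply_ne fun h => hne (Fin.ext (by have := congrArg Fin.val h; exact this))) hz
    refine (mul_le_mul_of_nonneg_left hcol hli0.le).trans ?_
    rw [Finset.mul_sum]
    refine Finset.sum_le_sum fun j hj => ?_
    have hjk : k ≤ (j : ℕ) := (Finset.mem_filter.1 hj).2
    have hPj := hPle (lam j) (hnn j) (hhigh j hjk)
    rw [← mul_assoc]
    refine mul_le_mul_of_nonneg_right ?_ (by positivity)
    -- `λ i f(λ j)² / f(λ i)² = λ j² p(λ j)² / (λ i p(λ i)²)`; the factor `x` in `f` cancels one
    -- `λ i` and leaves a spare `λ j ≤ λ k`.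
    have e1 : lam i' * ((lam j * P.eval (lam j)) ^ 2 / (lam i' * P.eval (lam i')) ^ 2)
        = (lam j * lam j * P.eval (lam j) ^ 2) / (lam i' * P.eval (lam i') ^ 2) := by
      field_simp
    have e2 : lamk1 / lamk * (Tq ^ 2)⁻¹ * lam j = (lamk1 * lam j * 1) / (lamk * Tq ^ 2) := by
      field_simp
    rw [e1, e2]
    have hj0 := hnn j
    have hjh := hhigh j hjk
    gcongr
  have htail : ∀ i : Fin n, ∑ r, ‖G r i‖ ^ 2 ≤ 1 := by
    intro i
    have h := hG (Pi.single i 1)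
    simpa [Pi.single_apply, apply_ite (fun z : ℂ => ‖z‖ ^ 2)] using h
  rw [← Finset.sum_filter_add_sum_filter_not Finset.univ (fun i : Fin n => k ≤ (i : ℕ)), add_mul,
    one_mul]
  refine add_le_add (Finset.sum_le_sum fun i _ => ?_) ?_
  · exact mul_le_of_le_one_right (hnn i) (htail i)
  -- Reindex the leading part by `Fin k`.
  have hre : ∑ i ∈ Finset.univ.filter fun i : Fin n => ¬ k ≤ (i : ℕ), lam i * ∑ r, ‖G r i‖ ^ 2
      = ∑ i : Fin k, lam (Fin.castLE hkn.le i) * ∑ r, ‖G r (Fin.castLE hkn.le i)‖ ^ 2 := by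
    symm
    refine Finset.sum_nbij (Fin.castLE hkn.le) ?_ ?_ ?_ (fun _ _ => rfl)
    · intro i _
      simp
    · exact (Fin.castLE_injective hkn.le).injOn
    · intro i hi
      have : (i : ℕ) < k := by simpa using hi
      exact ⟨⟨i, this⟩, by simp, rfl⟩
  rw [hre]
  refine (Finset.sum_le_sum fun i _ => hlead i).trans ?_
  rw [Finset.sum_comm, Finset.mul_sum]
  refine Finset.sum_le_sum fun j hj => ?_
  rw [← Finset.mul_sum]
  have hjk : k ≤ (j : ℕ) := (Finset.mem_filter.1 hj).2
  have hj0 := hnn j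
  calc lamk1 / lamk * (Tq ^ 2)⁻¹ * lam j * ∑ i, ‖W j i‖ ^ 2
      ≤ lamk1 / lamk * (Tq ^ 2)⁻¹ * lam j * S := by
        have := hrow j hjk
        gcongr
    _ = lamk1 / lamk * (Tq ^ 2)⁻¹ * S * lam j := by ring
end

section
/- Determinant bound via the spectral norm (derived in the proof of Theorem 6 from singular value inequalities): let d : {1,…,m} → ℝ be nonnegative, Λ = diag(d₁,…,d_m), and G ∈ ℂ^{m×k}. Then I_k + G*ΛG is Hermitian positive semidefinite, its determinant is a real number ≥ 1, and det(I_k + G*ΛG) ≤ Π_{i=1}^m (1 + ‖G‖₂²·d_i) = det(I_m + ‖G‖₂²·Λ). -/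
/-! The Weinstein–Aronszajn identity turns `det (I + G*ΛG)` into `det (I + √Λ GG* √Λ)`.  Since
`GG* ≤ ‖G‖₂² I` in the Loewner order, conjugating by `√Λ` gives `√Λ GG* √Λ ≤ ‖G‖₂² Λ`, and the
upper bound follows from monotonicity of the determinant on positive definite matrices
(`det_le_det_add`).  Monotonicity reduces to `1 ≤ det (I + P)` for `P ≥ 0`
(`one_le_det_one_add`), which is read off the eigenvalues; the same fact gives the lower bound. -/

open Matrix
open scoped ComplexOrder

open scoped MatrixOrder Matrix.Norms.L2Operator in
/-- The Loewner bound `GG* ≤ ‖G‖₂² I`. -/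
theorem posSemidef_specNorm_sq_sub {m k : ℕ} (G : Matrix (Fin m) (Fin k) ℂ) :
    (((specNorm G ^ 2 : ℝ) : ℂ) • (1 : Matrix (Fin m) (Fin m) ℂ) - G * Gᴴ).PosSemidef := by
  have hnorm : ‖G * Gᴴ‖ = specNorm G ^ 2 := by
    have h := l2_opNorm_conjTranspose_mul_self Gᴴ
    rw [conjTranspose_conjTranspose, l2_opNorm_conjTranspose] at h
    rw [h, sq]
    rfl
  have hsa : IsSelfAdjoint (G * Gᴴ) := isHermitian_mul_conjTranspose_self G
  have h := hsa.le_algebraMap_norm_self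
  rw [hnorm, Matrix.le_iff] at h
  have heq : algebraMap ℝ (Matrix (Fin m) (Fin m) ℂ) (specNorm G ^ 2) =
      ((specNorm G ^ 2 : ℝ) : ℂ) • (1 : Matrix (Fin m) (Fin m) ℂ) := by
    rw [Algebra.algebraMap_eq_smul_one]
    ext i j
    simp [Matrix.smul_apply]
  rwa [heq] at h

theorem one_le_det_one_add {n : ℕ} {P : Matrix (Fin n) (Fin n) ℂ} (hP : P.PosSemidef) :
    1 ≤ (1 + P).det := by
  have hdet : (1 + P).det = ∏ i, (1 + (hP.isHermitian.eigenvalues i : ℂ)) := by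
    conv_lhs => rw [hP.isHermitian.spectral_theorem, Unitary.conjStarAlgAut_apply,
      mul_assoc, det_one_add_mul_comm, mul_assoc, Unitary.coe_star_mul_self, mul_one]
    rw [← diagonal_one, diagonal_add, det_diagonal]
    rfl
  rw [hdet]
  have h : ∏ _i : Fin n, (1 : ℝ) ≤ ∏ i, (1 + hP.isHermitian.eigenvalues i) :=
    Finset.prod_le_prod (fun _ _ => zero_le_one) fun i _ =>
      le_add_of_nonneg_right (hP.eigenvalues_nonneg i)
  rw [Finset.prod_const_one] at h
  exact_mod_cast h

open scoped MatrixOrder Matrix.Norms.L2Operator in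
/-- The determinant is monotone in the Loewner order above a positive definite matrix.  Writing
`P = C*C`, the matrix determinant lemma gives `det (A + P) = det A * det (I + C A⁻¹ C*)`. -/
theorem det_le_det_add {n : ℕ} {A P : Matrix (Fin n) (Fin n) ℂ} (hA : A.PosDef)
    (hP : P.PosSemidef) : A.det ≤ (A + P).det := by
  obtain ⟨C, rfl⟩ := CStarAlgebra.nonneg_iff_eq_star_mul_self.mp hP.nonneg
  rw [star_eq_conjTranspose]
  rw [det_add_mul _ _ hA.det_pos.ne'.isUnit]
  exact le_mul_of_one_le_right hA.det_pos.le
    (one_le_det_one_add (hA.inv.posSemidef.mul_mul_conjTranspose_same C))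

/-- Determinant bound via the spectral norm: for `Λ = diag(d)` with `d ≥ 0` and any
`G`, the matrix `I + G*ΛG` is Hermitian positive semidefinite, its determinant is a
real number `≥ 1`, and `det(I + G*ΛG) ≤ ∏ᵢ (1 + ‖G‖₂²·dᵢ) = det(I + ‖G‖₂²·Λ)`. -/
theorem det_one_add_conjTranspose_mul_diag_mul_le
    (m k : ℕ) (hm : 0 < m) (hk : 0 < k)
    (d : Fin m → ℝ) (hd : ∀ i, 0 ≤ d i)
    (Λ : Matrix (Fin m) (Fin m) ℂ) (hΛ : Λ = Matrix.diagonal fun i => (d i : ℂ))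
    (G : Matrix (Fin m) (Fin k) ℂ) :
    ((1 : Matrix (Fin k) (Fin k) ℂ) + Gᴴ * Λ * G).PosSemidef ∧
      ((1 : Matrix (Fin k) (Fin k) ℂ) + Gᴴ * Λ * G).det.im = 0 ∧
      1 ≤ ((1 : Matrix (Fin k) (Fin k) ℂ) + Gᴴ * Λ * G).det.re ∧
      ((1 : Matrix (Fin k) (Fin k) ℂ) + Gᴴ * Λ * G).det.re ≤
        ∏ i : Fin m, (1 + specNorm G ^ 2 * d i) ∧
      ((1 : Matrix (Fin m) (Fin m) ℂ) + ((specNorm G ^ 2 : ℝ) : ℂ) • Λ).det =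
        ((∏ i : Fin m, (1 + specNorm G ^ 2 * d i) : ℝ) : ℂ) := by
  subst hΛ
  have hD : (diagonal fun i => (d i : ℂ)).PosSemidef :=
    PosSemidef.diagonal fun i => by simpa using hd i
  have hP := hD.conjTranspose_mul_mul_same G
  have h1 := one_le_det_one_add hP
  have hdet : ((1 : Matrix (Fin m) (Fin m) ℂ) +
      ((specNorm G ^ 2 : ℝ) : ℂ) • diagonal fun i => (d i : ℂ)).det =
        ((∏ i : Fin m, (1 + specNorm G ^ 2 * d i) : ℝ) : ℂ) := by
    rw [← diagonal_one, ← diagonal_smul, diagonal_add, det_diagonal]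
    simp
  have hle : (1 + Gᴴ * (diagonal fun i => (d i : ℂ)) * G).det ≤
      ((∏ i : Fin m, (1 + specNorm G ^ 2 * d i) : ℝ) : ℂ) := by
    -- `S` is the square root of `Λ`.
    set S : Matrix (Fin m) (Fin m) ℂ := diagonal fun i => ((√(d i) : ℝ) : ℂ) with hS
    have hSS : S * S = diagonal fun i => (d i : ℂ) := by
      rw [hS, diagonal_mul_diagonal]
      congr 1
      funext i
      rw [← Complex.ofReal_mul, Real.mul_self_sqrt (hd i)]
    have hSH : Sᴴ = S := by
      rw [hS, diagonal_conjTranspose]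
      congr 1
      funext i
      simp
    have hcomm : (1 + Gᴴ * (diagonal fun i => (d i : ℂ)) * G).det =
        (1 + S * (G * Gᴴ) * S).det := by
      rw [← hSS, ← Matrix.mul_assoc, Matrix.mul_assoc, det_one_add_mul_comm]
      simp only [Matrix.mul_assoc]
    have hpd : (1 + S * (G * Gᴴ) * S).PosDef := by
      refine PosDef.one.add_posSemidef ?_
      have := (posSemidef_self_mul_conjTranspose G).mul_mul_conjTranspose_same S
      rwa [hSH] at this
    have hdiff := (posSemidef_specNorm_sq_sub G).mul_mul_conjTranspose_same S
    rw [hSH] at hdiff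
    rw [hcomm, ← hdet, ← hSS]
    convert det_le_det_add hpd hdiff using 2
    simp [Matrix.mul_sub, Matrix.sub_mul]
  rw [Complex.le_def] at h1 hle
  exact ⟨PosSemidef.one.add hP, h1.2.symm, h1.1, hle.1, hdet⟩
end

section
/- Determinant splitting inequality (key step in the proof of Theorem 6): let d : {1,…,k} → ℝ be nonnegative, Λ = diag(d₁,…,d_k), Λ^{1/2} = diag(√d₁,…,√d_k), and H ∈ ℂ^{m×k}. Then I_k + H*H is invertible and det(I_k + Λ) ≤ det( I_k + Λ^{1/2}(I_k + H*H)^{−1}Λ^{1/2} ) · det( I_k + Λ^{1/2}H*HΛ^{1/2} ), where all three determinants are reals ≥ 1. -/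
/-!
Write `A = Hᴴ * H`, `B = 1 + A`, `P = Λ^{1/2} B⁻¹ Λ^{1/2}` and `Q = Λ^{1/2} A Λ^{1/2}`. Two facts
about positive semidefinite matrices give the inequality:

* `det (1 + P + Q) ≤ det (1 + P) * det (1 + Q)` (`det_one_add_add_le`): for `Q = Kᴴ * K`, the
  Weinstein–Aronszajn identity gives `det (1 + P + Q) = det (1 + P) * det (1 + K (1 + P)⁻¹ Kᴴ)`,
  and `(1 + P)⁻¹ ≤ 1` in the Loewner order;
* the determinant is monotone in the Loewner order (`det_le_det_add`).

Since `B⁻¹ + A - 1 = B⁻¹ + B - 2 = (B - 1) B⁻¹ (B - 1)` is positive semidefinite, `Λ ≤ P + Q`,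
hence `det (1 + Λ) ≤ det (1 + P + Q) ≤ det (1 + P) * det (1 + Q)`.

All determinant inequalities are stated in the partial order of `ℂ`, where `1 ≤ z` also says that
`z` is real.
-/

open Matrix
open scoped ComplexOrder

/-- By the spectral theorem, `det (1 + Y)` is the product of the `1 + λᵢ`. -/
lemma one_le_det_one_add_s19 {n : Type*} [Fintype n] [DecidableEq n] {Y : Matrix n n ℂ}
    (hY : Y.PosSemidef) : 1 ≤ (1 + Y).det := by
  have h : (1 + Y).det = ∏ i, (1 + (hY.1.eigenvalues i : ℂ)) := by
    conv_lhs => rw [hY.1.spectral_theorem, Unitary.conjStarAlgAut_apply, mul_assoc,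
      det_one_add_mul_comm, mul_assoc, Unitary.coe_star_mul_self, mul_one, ← diagonal_one,
      diagonal_add, det_diagonal]
    rfl
  rw [h]
  have h2 : (1 : ℝ) ≤ ∏ i, (1 + hY.1.eigenvalues i) :=
    Finset.prod_induction _ (1 ≤ ·) (fun _ _ => one_le_mul_of_one_le_of_one_le) le_rfl
      fun i _ => by linarith [hY.eigenvalues_nonneg i]
  exact_mod_cast h2

lemma det_add_conjTranspose_mul_self {m n : Type*} [Fintype m] [DecidableEq m] [Fintype n]
    [DecidableEq n] {X : Matrix n n ℂ} (hX : X.PosDef) (K : Matrix m n ℂ) :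
    (X + Kᴴ * K).det = X.det * (1 + K * X⁻¹ * Kᴴ).det := by
  have hu : IsUnit X.det := (isUnit_iff_isUnit_det _).1 hX.isUnit
  have h : X + Kᴴ * K = X * (1 + X⁻¹ * Kᴴ * K) := by
    rw [Matrix.mul_add, Matrix.mul_one, Matrix.mul_assoc, mul_nonsing_inv_cancel_left _ _ hu]
  rw [h, det_mul, det_one_add_mul_comm, ← Matrix.mul_assoc]

open scoped MatrixOrder in
/-- Loewner monotonicity of the determinant. -/
lemma det_le_det_add_s19 {n : Type*} [Fintype n] [DecidableEq n] {X Y : Matrix n n ℂ}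
    (hX : X.PosDef) (hY : Y.PosSemidef) : X.det ≤ (X + Y).det := by
  obtain ⟨K, rfl⟩ := CStarAlgebra.nonneg_iff_eq_star_mul_self.1 (nonneg_iff_posSemidef.2 hY)
  rw [star_eq_conjTranspose, det_add_conjTranspose_mul_self hX]
  exact le_mul_of_one_le_right hX.det_pos.le
    (one_le_det_one_add_s19 (hX.inv.posSemidef.mul_mul_conjTranspose_same K))

lemma posSemidef_one_sub_inv {n : Type*} [Fintype n] [DecidableEq n] {P : Matrix n n ℂ}
    (hP : P.PosSemidef) : (1 - (1 + P)⁻¹).PosSemidef := by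
  have hX : (1 + P).PosDef := PosDef.one.add_posSemidef hP
  have hu : IsUnit (1 + P).det := (isUnit_iff_isUnit_det _).1 hX.isUnit
  have hN : (P + Pᴴ * P).PosSemidef := hP.add (posSemidef_conjTranspose_mul_self P)
  have h := hN.mul_mul_conjTranspose_same (1 + P)⁻¹
  rw [hX.inv.isHermitian.eq, hP.isHermitian.eq] at h
  convert h using 1
  have e : P + P * P = (1 + P) * (1 + P) - (1 + P) := by noncomm_ring
  rw [e, Matrix.mul_sub, nonsing_inv_mul_cancel_left _ _ hu, nonsing_inv_mul _ hu, Matrix.sub_mul,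
    mul_nonsing_inv _ hu, Matrix.one_mul]

/-- Submultiplicativity `det (1 + P + Q) ≤ det (1 + P) * det (1 + Q)` for positive semidefinite `P`
and `Q = Kᴴ * K`. -/
lemma det_one_add_add_le {m n : Type*} [Fintype m] [DecidableEq m] [Fintype n] [DecidableEq n]
    {P : Matrix n n ℂ} (hP : P.PosSemidef) (K : Matrix m n ℂ) :
    (1 + P + Kᴴ * K).det ≤ (1 + P).det * (1 + Kᴴ * K).det := by
  have hX : (1 + P).PosDef := PosDef.one.add_posSemidef hP
  rw [det_add_conjTranspose_mul_self hX, det_one_add_mul_comm Kᴴ K]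
  refine mul_le_mul_of_nonneg_left ?_ hX.det_pos.le
  have h := det_le_det_add_s19
    (PosDef.one.add_posSemidef (hX.inv.posSemidef.mul_mul_conjTranspose_same K))
    ((posSemidef_one_sub_inv hP).mul_mul_conjTranspose_same K)
  convert h using 2
  rw [Matrix.mul_sub, Matrix.sub_mul, Matrix.mul_one]
  abel

/-- Determinant splitting inequality: for `Λ = diag(d)` with `d ≥ 0`,
`Λ^{1/2} = diag(√d)` and any `H`, the matrix `I + H*H` is invertible and
`det(I + Λ) ≤ det(I + Λ^{1/2}(I + H*H)⁻¹Λ^{1/2}) · det(I + Λ^{1/2}H*HΛ^{1/2})`,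
all three determinants being reals `≥ 1`. -/
theorem det_splitting_inequality
    (m k : ℕ) (hm : 0 < m) (hk : 0 < k)
    (d : Fin k → ℝ) (hd : ∀ i, 0 ≤ d i)
    (Λ Λh : Matrix (Fin k) (Fin k) ℂ)
    (hΛ : Λ = Matrix.diagonal fun i => (d i : ℂ))
    (hΛh : Λh = Matrix.diagonal fun i => (Real.sqrt (d i) : ℂ))
    (H : Matrix (Fin m) (Fin k) ℂ) :
    IsUnit ((1 : Matrix (Fin k) (Fin k) ℂ) + Hᴴ * H) ∧
      ((1 : Matrix (Fin k) (Fin k) ℂ) + Λ).det.im = 0 ∧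
      1 ≤ ((1 : Matrix (Fin k) (Fin k) ℂ) + Λ).det.re ∧
      ((1 : Matrix (Fin k) (Fin k) ℂ) +
        Λh * ((1 : Matrix (Fin k) (Fin k) ℂ) + Hᴴ * H)⁻¹ * Λh).det.im = 0 ∧
      1 ≤ ((1 : Matrix (Fin k) (Fin k) ℂ) +
        Λh * ((1 : Matrix (Fin k) (Fin k) ℂ) + Hᴴ * H)⁻¹ * Λh).det.re ∧
      ((1 : Matrix (Fin k) (Fin k) ℂ) + Λh * Hᴴ * H * Λh).det.im = 0 ∧
      1 ≤ ((1 : Matrix (Fin k) (Fin k) ℂ) + Λh * Hᴴ * H * Λh).det.re ∧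
      ((1 : Matrix (Fin k) (Fin k) ℂ) + Λ).det.re ≤
        ((1 : Matrix (Fin k) (Fin k) ℂ) +
          Λh * ((1 : Matrix (Fin k) (Fin k) ℂ) + Hᴴ * H)⁻¹ * Λh).det.re *
        ((1 : Matrix (Fin k) (Fin k) ℂ) + Λh * Hᴴ * H * Λh).det.re := by
  have hA : (Hᴴ * H).PosSemidef := posSemidef_conjTranspose_mul_self H
  have hB : (1 + Hᴴ * H).PosDef := PosDef.one.add_posSemidef hA
  have hu : IsUnit (1 + Hᴴ * H).det := (isUnit_iff_isUnit_det _).1 hB.isUnit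
  have hS : Λhᴴ = Λh := by
    rw [hΛh, diagonal_conjTranspose]
    congr 1
    ext i
    simp
  have hSS : Λh * Λh = Λ := by
    rw [hΛh, hΛ, diagonal_mul_diagonal]
    congr 1
    ext i
    rw [← Complex.ofReal_mul, Real.mul_self_sqrt (hd i)]
  have hL : Λ.PosSemidef := by
    have h := posSemidef_conjTranspose_mul_self Λh
    rwa [hS, hSS] at h
  have hP : (Λh * (1 + Hᴴ * H)⁻¹ * Λh).PosSemidef := by
    have h := hB.inv.posSemidef.mul_mul_conjTranspose_same Λh
    rwa [hS] at h
  have hQ : Λh * Hᴴ * H * Λh = (H * Λh)ᴴ * (H * Λh) := by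
    rw [conjTranspose_mul, hS]
    simp only [Matrix.mul_assoc]
  have hR : (Λh * (Hᴴ * H * (1 + Hᴴ * H)⁻¹ * (Hᴴ * H)) * Λh).PosSemidef := by
    have h := (hB.inv.posSemidef.mul_mul_conjTranspose_same (Hᴴ * H)).mul_mul_conjTranspose_same Λh
    rwa [hS, hA.isHermitian.eq] at h
  -- The difference `P + Q - Λ` is `Λ^{1/2} A B⁻¹ A Λ^{1/2}`.
  have key : 1 + Λ + Λh * (Hᴴ * H * (1 + Hᴴ * H)⁻¹ * (Hᴴ * H)) * Λh =
      1 + Λh * (1 + Hᴴ * H)⁻¹ * Λh + (H * Λh)ᴴ * (H * Λh) := by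
    have e : Hᴴ * H * (1 + Hᴴ * H)⁻¹ * (Hᴴ * H) = (1 + Hᴴ * H)⁻¹ + Hᴴ * H - 1 := by
      have h1 := mul_nonsing_inv _ hu
      have h2 := nonsing_inv_mul _ hu
      generalize (1 + Hᴴ * H)⁻¹ = M at h1 h2 ⊢
      generalize Hᴴ * H = A at h1 h2 ⊢
      have h3 : A * M = 1 - M := by rw [← h1]; noncomm_ring
      have h4 : M * A = 1 - M := by rw [← h2]; noncomm_ring
      rw [h3, Matrix.sub_mul, h4, Matrix.one_mul]
      abel
    rw [e, ← hQ, ← hSS]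
    simp only [Matrix.mul_sub, Matrix.mul_add, Matrix.sub_mul, Matrix.add_mul, Matrix.mul_one,
      Matrix.mul_assoc]
    abel
  have i1 := one_le_det_one_add_s19 hL
  have i2 := one_le_det_one_add_s19 hP
  have i3 := one_le_det_one_add_s19 (posSemidef_conjTranspose_mul_self (H * Λh))
  have i4 := (det_le_det_add_s19 (PosDef.one.add_posSemidef hL) hR).trans
    (key ▸ det_one_add_add_le hP (H * Λh))
  rw [hQ]
  rw [Complex.le_def] at i1 i2 i3 i4
  simp only [Complex.one_re, Complex.one_im] at i1 i2 i3
  refine ⟨hB.isUnit, i1.2.symm, i1.1, i2.2.symm, i2.1, i3.2.symm, i3.1, ?_⟩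
  have h := i4.1
  rwa [Complex.mul_re, ← i2.2, zero_mul, sub_zero] at h
end
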